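/- Let G be a finite bipartite graph with color classes A and B, b : V(G) → ℕ, and M a maximum b-matching of G. Let U_A be the set of M-loose vertices in A, let S_A ⊆ A be the set of vertices from which there exists an M-wedge path to some vertex of U_A, and let T_A ⊆ B be the set of vertices between which and some vertex of U_A there exists an M-exposed path. Then: (i) S_A ∪ (B ∖ T_A) is a b-verifying set; (ii) S_A = D(G;b) ∩ A; and consequently S_A ∪ T_A is the disjoint union of the vertex sets of all b-inconsistent flexible components hooked up by A. -/

import Mathlib

open scoped symmDiff

variable {V : Type} [Fintype V]

/-- `G` is bipartite with color classes `A` and `B`. -/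
structure Bipartition (G : SimpleGraph V) (A B : Set V) : Prop where
  disjoint : Disjoint A B
  cover : A ∪ B = Set.univ
  between : ∀ ⦃u v : V⦄, G.Adj u v → (u ∈ A ∧ v ∈ B) ∨ (u ∈ B ∧ v ∈ A)

/-- `M` is a `b`-matching of `G`: a set of edges of `G` such that each vertex `v` is
incident to at most `b v` edges of `M`. -/
def IsBMatching (G : SimpleGraph V) (b : V → ℕ) (M : Set (Sym2 V)) : Prop :=
  M ⊆ G.edgeSet ∧ ∀ v : V, {e ∈ M | v ∈ e}.ncard ≤ b v

/-- `M` is a maximum `b`-matching of `G`. -/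
def IsMaxBMatching (G : SimpleGraph V) (b : V → ℕ) (M : Set (Sym2 V)) : Prop :=
  IsBMatching G b M ∧ ∀ N : Set (Sym2 V), IsBMatching G b N → N.ncard ≤ M.ncard

/-- `E[X]`: the set of edges of `G` with both ends in `X`. -/
def edgesIn (G : SimpleGraph V) (X : Set V) : Set (Sym2 V) :=
  {e ∈ G.edgeSet | ∀ v ∈ e, v ∈ X}

/-- `b(X) = ∑_{v ∈ X} b v`. -/
noncomputable def bSum (b : V → ℕ) (X : Set V) : ℕ := ∑ᶠ v ∈ X, b v

/-- `Z` is a `b`-verifying set: `b(Zᶜ) + |E[Z]|` equals the size of a maximum `b`-matching. -/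
def IsVerifying (G : SimpleGraph V) (b : V → ℕ) (Z : Set V) : Prop :=
  ∃ M : Set (Sym2 V), IsMaxBMatching G b M ∧ bSum b Zᶜ + (edgesIn G Z).ncard = M.ncard

/-- `v` is `M`-tight. -/
def IsTight (b : V → ℕ) (M : Set (Sym2 V)) (v : V) : Prop :=
  {e ∈ M | v ∈ e}.ncard = b v

/-- `v` is `M`-loose. -/
def IsLoose (b : V → ℕ) (M : Set (Sym2 V)) (v : V) : Prop :=
  {e ∈ M | v ∈ e}.ncard < b v

/-- `M` is a perfect `b`-matching. -/
def IsPerfect (G : SimpleGraph V) (b : V → ℕ) (M : Set (Sym2 V)) : Prop :=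
  IsBMatching G b M ∧ ∀ v : V, IsTight b M v

/-- An edge is `b`-inevitable if it is an edge of `G` contained in every maximum `b`-matching. -/
def IsInevitable (G : SimpleGraph V) (b : V → ℕ) (e : Sym2 V) : Prop :=
  e ∈ G.edgeSet ∧ ∀ M : Set (Sym2 V), IsMaxBMatching G b M → e ∈ M

/-- An edge is `b`-forbidden if it is an edge of `G` contained in no maximum `b`-matching. -/
def IsForbidden (G : SimpleGraph V) (b : V → ℕ) (e : Sym2 V) : Prop :=
  e ∈ G.edgeSet ∧ ∀ M : Set (Sym2 V), IsMaxBMatching G b M → e ∉ M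

/-- An edge is `b`-flexible if some maximum `b`-matching contains it and some does not. -/
def IsFlexibleEdge (G : SimpleGraph V) (b : V → ℕ) (e : Sym2 V) : Prop :=
  (∃ M : Set (Sym2 V), IsMaxBMatching G b M ∧ e ∈ M) ∧
  (∃ M : Set (Sym2 V), IsMaxBMatching G b M ∧ e ∉ M)

/-- The spanning subgraph of `G` whose edges are the `b`-flexible edges. -/
def flexGraph (G : SimpleGraph V) (b : V → ℕ) : SimpleGraph V where
  Adj u v := IsFlexibleEdge G b s(u, v)
  symm := by
    constructor
    intro u v h
    rwa [Sym2.eq_swap] at h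
  loopless := by
    constructor
    intro v h
    obtain ⟨⟨M, hM, heM⟩, -⟩ := h
    exact G.loopless.irrefl v ((G.mem_edgeSet).mp (hM.1.1 heM))

/-- A `b`-flexible component of `G`, identified with the corresponding connected
component of the spanning subgraph of flexible edges. -/
abbrev FlexComp (G : SimpleGraph V) (b : V → ℕ) := (flexGraph G b).ConnectedComponent

/-- `D(G;b)`: the set of vertices that are `M`-loose for some maximum `b`-matching `M`. -/
def Dset (G : SimpleGraph V) (b : V → ℕ) : Set V :=
  {v | ∃ M : Set (Sym2 V), IsMaxBMatching G b M ∧ IsLoose b M v}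

/-- `c` is a `b`-loose flexible component. -/
def LooseComp (G : SimpleGraph V) (b : V → ℕ) (c : FlexComp G b) : Prop :=
  ∃ v ∈ c.supp, v ∈ Dset G b

/-- `c` is a `b`-inactive flexible component. -/
def InactiveComp (G : SimpleGraph V) (b : V → ℕ) (c : FlexComp G b) : Prop :=
  ∃ v, c.supp = {v} ∧ b v = 0

/-- `c` is a `b`-inconsistent flexible component. -/
def InconsistentComp (G : SimpleGraph V) (b : V → ℕ) (c : FlexComp G b) : Prop :=
  LooseComp G b c ∨ ∃ v, c.supp = {v} ∧ b v = 0 ∧ ∃ u ∈ Dset G b, G.Adj v u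

/-- `c` is a `b`-consistent flexible component. -/
def ConsistentComp (G : SimpleGraph V) (b : V → ℕ) (c : FlexComp G b) : Prop :=
  ¬ InconsistentComp G b c

/-- `c` is a `b`-loose flexible component hooked up by the color class `W`. -/
def LooseHooked (G : SimpleGraph V) (b : V → ℕ) (W : Set V) (c : FlexComp G b) : Prop :=
  ∃ v ∈ c.supp ∩ W, v ∈ Dset G b

/-- `c` is a `b`-inactive flexible component hooked up by the color class `W`. -/
def InactiveHooked (G : SimpleGraph V) (b : V → ℕ) (W : Set V) (c : FlexComp G b) : Prop :=
  ∃ v, c.supp = {v} ∧ b v = 0 ∧ ∃ u ∈ Dset G b ∩ W, G.Adj v u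

/-- `c` is a `b`-inconsistent flexible component hooked up by the color class `W`. -/
def HookedUp (G : SimpleGraph V) (b : V → ℕ) (W : Set V) (c : FlexComp G b) : Prop :=
  LooseHooked G b W c ∨ InactiveHooked G b W c

/-- `X` is separating: empty or a union of vertex sets of `b`-flexible components. -/
def IsSeparating (G : SimpleGraph V) (b : V → ℕ) (X : Set V) : Prop :=
  ∃ S : Set (FlexComp G b), X = ⋃ c ∈ S, c.supp

/-- The number of edges in the list `es` incident to `v` that lie in `M`. -/
noncomputable def edgeDeg (es : List (Sym2 V)) (M : Set (Sym2 V)) (v : V) : ℕ :=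
  {e : Sym2 V | e ∈ es ∧ v ∈ e ∧ e ∈ M}.ncard

/-- `p` is an `M`-wedge path from `x` to `y`. -/
def IsWedgePath {G : SimpleGraph V} (M : Set (Sym2 V)) {x y : V} (p : G.Walk x y) : Prop :=
  p.IsPath ∧ (∀ v ∈ p.support, v ≠ y → edgeDeg p.edges M v = 1) ∧ edgeDeg p.edges M y = 0

/-- `p` is an `M`-saturated path between `x` and `y`. -/
def IsSaturatedPath {G : SimpleGraph V} (M : Set (Sym2 V)) {x y : V} (p : G.Walk x y) : Prop :=
  p.IsPath ∧ ∀ v ∈ p.support, edgeDeg p.edges M v = 1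

/-- `p` is an `M`-exposed path between `x` and `y`. -/
def IsExposedPath {G : SimpleGraph V} (M : Set (Sym2 V)) {x y : V} (p : G.Walk x y) : Prop :=
  p.IsPath ∧ ∀ v ∈ p.support, edgeDeg p.edges Mᶜ v = 1

/-- `p` is an `(M; A, B)`-ascending path from `u` to `v`. -/
def IsAscending {G : SimpleGraph V} (A B : Set V) (M : Set (Sym2 V)) {u v : V}
    (p : G.Walk u v) : Prop :=
  (u ∈ A → v ∈ A → IsWedgePath M p) ∧
  (u ∈ A → v ∈ B → IsSaturatedPath M p) ∧
  (u ∈ B → v ∈ A → IsExposedPath M p) ∧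
  (u ∈ B → v ∈ B → IsWedgePath M p.reverse)

/-- The one-step relation `⊴_A` on `b`-flexible components: `c₁ ⊴_A c₂` iff `c₁ = c₂`, or
there is a `b`-inevitable edge between `V(c₁) ∩ A` and `V(c₂) ∩ B`, or a `b`-forbidden edge
between `V(c₂) ∩ A` and `V(c₁) ∩ B`. -/
def StepRel (G : SimpleGraph V) (b : V → ℕ) (A B : Set V) (c₁ c₂ : FlexComp G b) : Prop :=
  c₁ = c₂ ∨
  (∃ u ∈ c₁.supp ∩ A, ∃ v ∈ c₂.supp ∩ B, IsInevitable G b s(u, v)) ∨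
  (∃ u ∈ c₂.supp ∩ A, ∃ v ∈ c₁.supp ∩ B, IsForbidden G b s(u, v))

/-- The one-step relation `⊴_A` restricted to `b`-consistent flexible components. -/
def ConsStepRel (G : SimpleGraph V) (b : V → ℕ) (A B : Set V) (c₁ c₂ : FlexComp G b) : Prop :=
  ConsistentComp G b c₁ ∧ ConsistentComp G b c₂ ∧ StepRel G b A B c₁ c₂

/-- `I` is a lower ideal of the relation `r`. -/
def IsLowerIdeal {α : Type*} (r : α → α → Prop) (I : Set α) : Prop :=
  ∀ ⦃c d : α⦄, d ∈ I → r c d → c ∈ I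

/-- `I` is an upper ideal of the relation `r`. -/
def IsUpperIdeal {α : Type*} (r : α → α → Prop) (I : Set α) : Prop :=
  ∀ ⦃c d : α⦄, c ∈ I → r c d → d ∈ I

/-!
Orient the edges of `M` from `A` to `B` and all other edges from `B` to `A`. The wedge paths and
exposed paths that end in `U_A` are exactly the directed paths of this residual digraph that end in
`U_A`; let `R` be the set of their starting vertices. Flipping `M` along such a path moves the
looseness of its end to its start when the start lies in `A`, and otherwise would enlarge `M` unless
the start is tight. Since no residual edge enters `R` from outside, weak duality holds with equality
for `M` at `Z = (A ∩ R) ∪ (B ∖ R)`. Complementary slackness for every other maximum `b`-matching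
then shows that no vertex of `A ∖ R` is ever loose and that a flexible edge has exactly one end in
`Z`, hence both or no ends in `R`, so `R` is a union of flexible components.
-/

section

omit [Fintype V]

variable {G : SimpleGraph V} {A B Z : Set V} {b : V → ℕ} {M N : Set (Sym2 V)} {u v x y z : V}

namespace Bipartition

theorem symm (hG : Bipartition G A B) : Bipartition G B A where
  disjoint := hG.disjoint.symm
  cover := Set.union_comm A B ▸ hG.cover
  between _ _ h := (hG.between h).symm

theorem notMem_left_iff (hG : Bipartition G A B) : v ∉ A ↔ v ∈ B := by
  have hcover : v ∈ A ∪ B := hG.cover ▸ Set.mem_univ v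
  exact ⟨hcover.resolve_left, fun hvB => Set.disjoint_right.1 hG.disjoint hvB⟩

theorem mem_left_iff_of_adj (hG : Bipartition G A B) (h : G.Adj u v) : u ∈ A ↔ v ∉ A := by
  have := hG.between h
  have := hG.notMem_left_iff (v := u)
  have := hG.notMem_left_iff (v := v)
  tauto

theorem exists_eq_mk (hG : Bipartition G A B) {e : Sym2 V} (he : e ∈ G.edgeSet) :
    ∃ u ∈ A, ∃ v ∉ A, G.Adj u v ∧ e = s(u, v) := by
  induction e with | h u v =>
  have huv : u ∈ A ↔ v ∉ A := hG.mem_left_iff_of_adj he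
  by_cases hu : u ∈ A
  · exact ⟨u, hu, v, huv.1 hu, he, rfl⟩
  · exact ⟨v, not_not.1 (mt huv.2 hu), u, hu, he.symm, Sym2.eq_swap⟩

theorem mem_inter_union_diff_iff (hG : Bipartition G A B) {R : Set V} :
    v ∈ A ∩ R ∪ B \ R ↔ (v ∈ A ↔ v ∈ R) := by
  have := hG.notMem_left_iff (v := v)
  grind

end Bipartition

theorem mk_mem_edgesIn {X : Set V} (h : G.Adj u v) :
    s(u, v) ∈ edgesIn G X ↔ u ∈ X ∧ v ∈ X := by
  simp [edgesIn, h]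

/-- The number of edges of `M` incident to `v`. -/
noncomputable def degIn (M : Set (Sym2 V)) (v : V) : ℕ := {e ∈ M | v ∈ e}.ncard

open Classical in
theorem degIn_insert {e : Sym2 V} (hM : M.Finite) (he : e ∉ M) (v : V) :
    degIn (insert e M) v = degIn M v + if v ∈ e then 1 else 0 := by
  unfold degIn
  split_ifs with hv
  · rw [← Set.ncard_insert_of_notMem (fun h => he h.1) (hM.subset (Set.sep_subset _ _))]
    congr 1
    grind
  · congr 1
    grind

theorem edgeDeg_eq_degIn (es : List (Sym2 V)) (M : Set (Sym2 V)) (v : V) :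
    edgeDeg es M v = degIn (M ∩ {e | e ∈ es}) v := by
  unfold edgeDeg degIn
  congr 1
  grind

open Classical in
theorem edgeDeg_cons {e : Sym2 V} {es : List (Sym2 V)} (he : e ∉ es) (M : Set (Sym2 V)) (v : V) :
    edgeDeg (e :: es) M v = edgeDeg es M v + if v ∈ e ∧ e ∈ M then 1 else 0 := by
  simp only [edgeDeg_eq_degIn]
  by_cases heM : e ∈ M
  · have hinsert : M ∩ {d | d ∈ e :: es} = insert e (M ∩ {d | d ∈ es}) := by grind
    rw [hinsert, degIn_insert ((List.finite_toSet es).inter_of_right M) (fun h => he h.2)]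
    simp only [heM, and_true]
  · have hsame : M ∩ {d | d ∈ e :: es} = M ∩ {d | d ∈ es} := by grind
    simp only [hsame, heM, and_false, if_false, add_zero]

theorem edgeDeg_eq_zero {p : G.Walk x y} (hv : v ∉ p.support) (M : Set (Sym2 V)) :
    edgeDeg p.edges M v = 0 := by
  have hempty : {e | e ∈ p.edges ∧ v ∈ e ∧ e ∈ M} = ∅ :=
    Set.eq_empty_of_forall_notMem fun e he => hv (p.mem_support_of_mem_edges he.1 he.2.1)
  rw [edgeDeg, hempty, Set.ncard_empty]

/-! ### Residual walks -/

/-- `p` is a directed walk in the residual digraph of `M`, in which the edges of `M` are oriented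
out of `A` and all other edges into `A`. -/
def IsResidual (A : Set V) (M : Set (Sym2 V)) (p : G.Walk x y) : Prop :=
  ∀ d ∈ p.darts, (d.fst ∈ A ↔ d.edge ∈ M)

theorem isResidual_cons (h : G.Adj x v) (p : G.Walk v y) :
    IsResidual A M (p.cons h) ↔ (x ∈ A ↔ s(x, v) ∈ M) ∧ IsResidual A M p := by
  simp [IsResidual]

theorem isResidual_compl (hG : Bipartition G A B) (p : G.Walk x y) :
    IsResidual B Mᶜ p ↔ IsResidual A M p :=
  forall₂_congr fun d _ => by rw [← hG.notMem_left_iff, Set.mem_compl_iff, not_iff_not]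

open Classical in
theorem isResidual_iff_edgeDeg (hG : Bipartition G A B) {p : G.Walk x z} (hp : p.IsPath) :
    IsResidual A M p ↔ ∀ v ∈ p.support, edgeDeg p.edges M v =
      if v ∈ A then (if v = z then 0 else 1) else (if v = x then 0 else 1) := by
  induction p with
  | nil => simp [IsResidual, edgeDeg]
  | @cons x y z h p ih =>
    obtain ⟨hp, hx⟩ := (SimpleGraph.Walk.cons_isPath_iff h p).1 hp
    have hxz : x ≠ z := fun h' => hx (h' ▸ p.end_mem_support)
    have hxy : s(x, y) ∉ p.edges := fun h' => hx (p.fst_mem_support_of_mem_edges h')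
    have hA : x ∈ A ↔ y ∉ A := hG.mem_left_iff_of_adj h
    have hstart : edgeDeg (s(x, y) :: p.edges) M x =
        (if x ∈ A then (if x = z then 0 else 1) else (if x = x then 0 else 1)) ↔
        (x ∈ A ↔ s(x, y) ∈ M) := by
      rw [edgeDeg_cons hxy, edgeDeg_eq_zero hx]
      grind
    rw [isResidual_cons, ih hp, SimpleGraph.Walk.support_cons, List.forall_mem_cons,
      SimpleGraph.Walk.edges_cons, hstart]
    refine and_congr_right fun hd => forall₂_congr fun v hv => ?_
    have hvx : v ≠ x := fun h' => hx (h' ▸ hv)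
    rw [edgeDeg_cons hxy]
    grind

theorem isWedgePath_iff (hG : Bipartition G A B) (hx : x ∈ A) (hz : z ∈ A) (p : G.Walk x z) :
    IsWedgePath M p ↔ p.IsPath ∧ IsResidual A M p := by
  refine and_congr_right fun hp => ?_
  rw [isResidual_iff_edgeDeg hG hp]
  have := p.end_mem_support
  grind

theorem isExposedPath_iff (hG : Bipartition G A B) (hx : x ∈ B) (hz : z ∈ A) (p : G.Walk x z) :
    IsExposedPath M p ↔ p.IsPath ∧ IsResidual A M p := by
  refine and_congr_right fun hp => ?_
  rw [← isResidual_compl hG, isResidual_iff_edgeDeg hG.symm hp]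
  have := hG.notMem_left_iff (v := z)
  have := hG.notMem_left_iff (v := x)
  refine forall₂_congr fun v _ => ?_
  grind

namespace IsMaxBMatching

theorem ncard_eq (hM : IsMaxBMatching G b M) (hN : IsMaxBMatching G b N) : M.ncard = N.ncard :=
  le_antisymm (hN.2 M hM.1) (hM.2 N hN.1)

theorem of_ncard_le (hM : IsMaxBMatching G b M) (hN : IsBMatching G b N)
    (h : M.ncard ≤ N.ncard) : IsMaxBMatching G b N :=
  ⟨hN, fun K hK => (hM.2 K hK).trans h⟩

end IsMaxBMatching

theorem symmDiff_edgeSet_subset (hM : M ⊆ G.edgeSet) (p : G.Walk x y) :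
    M ∆ p.edgeSet ⊆ G.edgeSet := by
  rintro e (⟨he, -⟩ | ⟨he, -⟩)
  exacts [hM he, p.edges_subset_edgeSet he]

/-- The vertices from which the residual digraph of `M` has a directed walk to an `M`-loose vertex
of `A`. -/
def looseReach (G : SimpleGraph V) (A : Set V) (b : V → ℕ) (M : Set (Sym2 V)) : Set V :=
  {x | ∃ z ∈ A, IsLoose b M z ∧ ∃ p : G.Walk x z, IsResidual A M p}

theorem mem_looseReach_of_isLoose (hv : v ∈ A) (hloose : IsLoose b M v) :
    v ∈ looseReach G A b M :=
  ⟨v, hv, hloose, .nil, by simp [IsResidual]⟩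

theorem mem_looseReach_of_adj (h : G.Adj u v) (huv : u ∈ A ↔ s(u, v) ∈ M)
    (hv : v ∈ looseReach G A b M) : u ∈ looseReach G A b M := by
  obtain ⟨z, hz, hloose, p, hp⟩ := hv
  exact ⟨z, hz, hloose, p.cons h, (isResidual_cons h p).2 ⟨huv, hp⟩⟩

theorem exists_isPath_of_mem_looseReach (hx : x ∈ looseReach G A b M) :
    ∃ z ∈ A, IsLoose b M z ∧ ∃ p : G.Walk x z, p.IsPath ∧ IsResidual A M p := by
  classical
  obtain ⟨z, hz, hloose, p, hp⟩ := hx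
  exact ⟨z, hz, hloose, p.bypass, p.bypass_isPath,
    fun d hd => hp d (p.darts_bypass_subset_darts hd)⟩

theorem exists_adj_of_mem_looseReach (hv : v ∈ looseReach G A b M) (hvA : v ∉ A) :
    ∃ x ∈ looseReach G A b M, G.Adj v x ∧ s(v, x) ∉ M := by
  obtain ⟨z, hz, hloose, p, hp⟩ := hv
  cases p with
  | nil => exact absurd hz hvA
  | @cons _ x _ h p =>
    obtain ⟨hvx, hp⟩ := (isResidual_cons h p).1 hp
    exact ⟨x, ⟨z, hz, hloose, p, hp⟩, h, mt hvx.2 hvA⟩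

theorem setOf_isWedgePath_eq (hG : Bipartition G A B) :
    {x ∈ A | ∃ z ∈ {v ∈ A | IsLoose b M v}, ∃ p : G.Walk x z, IsWedgePath M p} =
      A ∩ looseReach G A b M := by
  ext x
  refine and_congr_right fun hx => ⟨?_, fun hreach => ?_⟩
  · rintro ⟨z, ⟨hz, hloose⟩, p, hp⟩
    exact ⟨z, hz, hloose, p, ((isWedgePath_iff hG hx hz p).1 hp).2⟩
  · obtain ⟨z, hz, hloose, p, hp⟩ := exists_isPath_of_mem_looseReach hreach
    exact ⟨z, ⟨hz, hloose⟩, p, (isWedgePath_iff hG hx hz p).2 hp⟩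

theorem setOf_isExposedPath_eq (hG : Bipartition G A B) :
    {x ∈ B | ∃ z ∈ {v ∈ A | IsLoose b M v}, ∃ p : G.Walk x z, IsExposedPath M p} =
      B ∩ looseReach G A b M := by
  ext x
  refine and_congr_right fun hx => ⟨?_, fun hreach => ?_⟩
  · rintro ⟨z, ⟨hz, hloose⟩, p, hp⟩
    exact ⟨z, hz, hloose, p, ((isExposedPath_iff hG hx hz p).1 hp).2⟩
  · obtain ⟨z, hz, hloose, p, hp⟩ := exists_isPath_of_mem_looseReach hreach
    exact ⟨z, ⟨hz, hloose⟩, p, (isExposedPath_iff hG hx hz p).2 hp⟩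

section Finite

variable [Finite V]

theorem degIn_mono (h : N ⊆ M) (v : V) : degIn N v ≤ degIn M v :=
  Set.ncard_le_ncard fun _ he => ⟨h he.1, he.2⟩

theorem degIn_pos_iff : 0 < degIn M v ↔ ∃ e ∈ M, v ∈ e := by
  rw [degIn, Set.ncard_pos]
  rfl

theorem degIn_diff_singleton_lt {e : Sym2 V} (he : e ∈ M) (hv : v ∈ e) :
    degIn (M \ {e}) v < degIn M v := by
  classical
  have hdeg := degIn_insert (M \ {e}).toFinite (fun h => h.2 rfl) v
  rw [Set.insert_sdiff_singleton, Set.insert_eq_of_mem he, if_pos hv] at hdeg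
  omega

theorem degIn_symmDiff_walk (M : Set (Sym2 V)) (p : G.Walk x y) (v : V) :
    degIn (M ∆ p.edgeSet) v + edgeDeg p.edges M v = degIn M v + edgeDeg p.edges Mᶜ v := by
  simp only [edgeDeg_eq_degIn]
  unfold degIn
  rw [← Set.ncard_union_add_ncard_inter, ← Set.ncard_union_add_ncard_inter {e ∈ M | v ∈ e}]
  congr 2 <;> ext e <;> simp [Set.mem_symmDiff, SimpleGraph.Walk.edgeSet] <;> tauto

open Classical in
theorem degIn_symmDiff_of_isResidual (hG : Bipartition G A B) {p : G.Walk x z} (hp : p.IsPath)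
    (hr : IsResidual A M p) (hz : z ∈ A) (v : V) :
    degIn (M ∆ p.edgeSet) v + (if v = x ∧ x ∈ A then 1 else 0) =
      degIn M v + (if v = z then 1 else 0) + if v = x ∧ x ∉ A then 1 else 0 := by
  have hsymm := degIn_symmDiff_walk M p v
  have hM := (isResidual_iff_edgeDeg hG hp).1 hr v
  have hMc := (isResidual_iff_edgeDeg hG.symm hp).1 ((isResidual_compl hG p).2 hr) v
  have hB := hG.notMem_left_iff (v := v)
  by_cases hv : v ∈ p.support
  · grind
  · have hvx : v ≠ x := fun h => hv (h ▸ p.start_mem_support)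
    have hvz : v ≠ z := fun h => hv (h ▸ p.end_mem_support)
    simpa [edgeDeg_eq_zero hv, hvx, hvz] using hsymm

/-! ### Double counting and weak duality -/

theorem bSum_eq_sum (b : V → ℕ) (X : Set V) : bSum b X = ∑ v ∈ X.toFinite.toFinset, b v :=
  finsum_mem_eq_finite_toFinset_sum b X.toFinite

theorem bSum_add (f g : V → ℕ) (X : Set V) :
    bSum (fun v => f v + g v) X = bSum f X + bSum g X :=
  finsum_mem_add_distrib X.toFinite

theorem bSum_le_bSum {f g : V → ℕ} {X : Set V} (h : ∀ v ∈ X, f v ≤ g v) :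
    bSum f X ≤ bSum g X := by
  rw [bSum_eq_sum, bSum_eq_sum]
  exact Finset.sum_le_sum fun v hv => h v (X.toFinite.mem_toFinset.1 hv)

theorem bSum_eq_bSum_iff_of_le {f g : V → ℕ} {X : Set V} (h : ∀ v ∈ X, f v ≤ g v) :
    bSum f X = bSum g X ↔ ∀ v ∈ X, f v = g v := by
  rw [bSum_eq_sum, bSum_eq_sum,
    Finset.sum_eq_sum_iff_of_le fun v hv => h v (X.toFinite.mem_toFinset.1 hv)]
  simp only [Set.Finite.mem_toFinset]

open Classical in
theorem bSum_ite_eq (x : V) (X : Set V) :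
    bSum (fun v => if v = x then 1 else 0) X = if x ∈ X then 1 else 0 := by
  simp [bSum_eq_sum]

open Classical in
theorem bSum_ite_mem_sym2 (hxy : x ≠ y) (X : Set V) :
    bSum (fun v => if v ∈ s(x, y) then 1 else 0) X =
      (if x ∈ X then 1 else 0) + if y ∈ X then 1 else 0 := by
  rw [← bSum_ite_eq, ← bSum_ite_eq, ← bSum_add]
  congr 1
  ext v
  grind

-- The degree sum over `X` counts the edges inside `X` twice and the edges inside `Xᶜ` not at all.
theorem ncard_add_ncard_inter_edgesIn (hN : N ⊆ G.edgeSet) (X : Set V) :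
    N.ncard + (N ∩ edgesIn G X).ncard = bSum (degIn N) X + (N ∩ edgesIn G Xᶜ).ncard := by
  classical
  induction N, N.toFinite using Set.Finite.induction_on with
  | empty => simp [bSum_eq_sum, degIn]
  | @insert e N he hfin ih =>
    obtain ⟨heG, hN⟩ := Set.insert_subset_iff.1 hN
    have hinter (S : Set (Sym2 V)) :
        (insert e N ∩ S).ncard = (N ∩ S).ncard + if e ∈ S then 1 else 0 := by
      split_ifs with heS
      · rw [Set.insert_inter_of_mem heS, Set.ncard_insert_of_notMem fun h => he h.1]
      · rw [Set.insert_inter_of_notMem heS, add_zero]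
    have hdeg : degIn (insert e N) = fun v => degIn N v + if v ∈ e then 1 else 0 :=
      funext (degIn_insert hfin he)
    induction e with | h x y =>
    rw [hdeg, bSum_add, bSum_ite_mem_sym2 (G.ne_of_adj heG), Set.ncard_insert_of_notMem he,
      hinter, hinter]
    simp only [mk_mem_edgesIn heG, Set.mem_compl_iff]
    grind

theorem ncard_eq_bSum_degIn (hG : Bipartition G A B) (hN : N ⊆ G.edgeSet) :
    N.ncard = bSum (degIn N) A := by
  have hempty (X : Set V) (hX : X = A ∨ X = Aᶜ) : N ∩ edgesIn G X = ∅ := by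
    refine Set.eq_empty_of_forall_notMem fun e ⟨_, heG, hmem⟩ => ?_
    obtain ⟨u, hu, v, hv, -, rfl⟩ := hG.exists_eq_mk heG
    rcases hX with rfl | rfl
    exacts [hv (hmem v (Sym2.mem_mk_right u v)), hmem u (Sym2.mem_mk_left u v) hu]
  simpa [hempty] using ncard_add_ncard_inter_edgesIn hN A

open Classical in
theorem ncard_symmDiff_of_isResidual (hG : Bipartition G A B) (hM : M ⊆ G.edgeSet)
    {p : G.Walk x z} (hp : p.IsPath) (hr : IsResidual A M p) (hz : z ∈ A) :
    (M ∆ p.edgeSet).ncard = M.ncard + if x ∈ A then 0 else 1 := by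
  have hdeg := degIn_symmDiff_of_isResidual hG hp hr hz
  rw [ncard_eq_bSum_degIn hG hM, ncard_eq_bSum_degIn hG (symmDiff_edgeSet_subset hM p)]
  have hsum := congrArg (bSum · A) (funext hdeg)
  by_cases hx : x ∈ A <;> simpa [hx, hz, bSum_add, bSum_ite_eq] using hsum

theorem IsBMatching.symmDiff_of_isResidual (hG : Bipartition G A B) (hM : IsBMatching G b M)
    {p : G.Walk x z} (hp : p.IsPath) (hr : IsResidual A M p) (hz : z ∈ A)
    (hloose : IsLoose b M z) (hx : x ∈ A ∨ IsLoose b M x) : IsBMatching G b (M ∆ p.edgeSet) := by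
  classical
  refine ⟨symmDiff_edgeSet_subset hM.1 p, fun v => ?_⟩
  have hdeg := degIn_symmDiff_of_isResidual hG hp hr hz v
  have hle : degIn M v ≤ b v := hM.2 v
  change degIn M z < b z at hloose
  change x ∈ A ∨ degIn M x < b x at hx
  change degIn (M ∆ p.edgeSet) v ≤ b v
  grind

theorem IsBMatching.ncard_eq_iff (hN : IsBMatching G b N) (Z : Set V) :
    bSum b Zᶜ + (edgesIn G Z).ncard = N.ncard ↔
      (∀ v ∉ Z, IsTight b N v) ∧ edgesIn G Z ⊆ N ∧ N ∩ edgesIn G Zᶜ = ∅ := by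
  have hcount := ncard_add_ncard_inter_edgesIn hN.1 Zᶜ
  rw [compl_compl] at hcount
  have hdeg : ∀ v ∈ Zᶜ, degIn N v ≤ b v := fun v _ => hN.2 v
  have hsum_le : bSum (degIn N) Zᶜ ≤ bSum b Zᶜ := bSum_le_bSum hdeg
  have hsum_eq : bSum (degIn N) Zᶜ = bSum b Zᶜ ↔ ∀ v ∉ Z, IsTight b N v :=
    bSum_eq_bSum_iff_of_le hdeg
  have hedges_le : (N ∩ edgesIn G Z).ncard ≤ (edgesIn G Z).ncard :=
    Set.ncard_le_ncard Set.inter_subset_right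
  have hedges_eq : (N ∩ edgesIn G Z).ncard = (edgesIn G Z).ncard ↔ edgesIn G Z ⊆ N := by
    rw [← Set.inter_eq_right]
    exact ⟨fun h => Set.eq_of_subset_of_ncard_le Set.inter_subset_right h.ge, congrArg _⟩
  rw [← hsum_eq, ← hedges_eq, ← Set.ncard_eq_zero]
  omega

namespace IsMaxBMatching

theorem isVerifying_iff (hM : IsMaxBMatching G b M) :
    IsVerifying G b Z ↔
      (∀ v ∉ Z, IsTight b M v) ∧ edgesIn G Z ⊆ M ∧ M ∩ edgesIn G Zᶜ = ∅ := by
  rw [← hM.1.ncard_eq_iff]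
  exact ⟨fun ⟨N, hN, h⟩ => h.trans (hN.ncard_eq hM), fun h => ⟨M, hM, h⟩⟩

theorem mem_Dset_of_isResidual (hG : Bipartition G A B) (hM : IsMaxBMatching G b M)
    {p : G.Walk x z} (hp : p.IsPath) (hr : IsResidual A M p) (hx : x ∈ A) (hz : z ∈ A)
    (hloose : IsLoose b M z) : x ∈ Dset G b := by
  classical
  have hN := hM.1.symmDiff_of_isResidual hG hp hr hz hloose (.inl hx)
  refine ⟨_, hM.of_ncard_le hN ?_, ?_⟩
  · simp [ncard_symmDiff_of_isResidual hG hM.1.1 hp hr hz, hx]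
  · have hdeg := degIn_symmDiff_of_isResidual hG hp hr hz x
    have hle : degIn M x ≤ b x := hM.1.2 x
    change degIn M z < b z at hloose
    change degIn (M ∆ p.edgeSet) x < b x
    grind

theorem isTight_of_isResidual (hG : Bipartition G A B) (hM : IsMaxBMatching G b M)
    {p : G.Walk x z} (hp : p.IsPath) (hr : IsResidual A M p) (hx : x ∉ A) (hz : z ∈ A)
    (hloose : IsLoose b M z) : IsTight b M x := by
  classical
  by_contra htight
  have hxloose : IsLoose b M x := lt_of_le_of_ne (hM.1.2 x) htight
  have hle := hM.2 _ (hM.1.symmDiff_of_isResidual hG hp hr hz hloose (.inr hxloose))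
  simp [ncard_symmDiff_of_isResidual hG hM.1.1 hp hr hz, hx] at hle

theorem isVerifying_looseReach (hG : Bipartition G A B) (hM : IsMaxBMatching G b M) :
    IsVerifying G b (A ∩ looseReach G A b M ∪ B \ looseReach G A b M) := by
  refine hM.isVerifying_iff.2 ⟨fun v hv => ?_, fun e he => ?_, ?_⟩
  · rw [hG.mem_inter_union_diff_iff] at hv
    by_cases hvA : v ∈ A
    · by_contra htight
      exact hv (iff_of_true hvA
        (mem_looseReach_of_isLoose hvA (lt_of_le_of_ne (hM.1.2 v) htight)))
    · obtain ⟨z, hz, hloose, p, hp, hr⟩ :=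
        exists_isPath_of_mem_looseReach (not_not.1 fun h => hv (iff_of_false hvA h))
      exact hM.isTight_of_isResidual hG hp hr hvA hz hloose
  · obtain ⟨u, hu, v, hv, huv, rfl⟩ := hG.exists_eq_mk he.1
    rw [mk_mem_edgesIn huv, hG.mem_inter_union_diff_iff, hG.mem_inter_union_diff_iff] at he
    by_contra hnotMem
    exact hv (he.2.2 (mem_looseReach_of_adj huv.symm
      (iff_of_false hv (Sym2.eq_swap ▸ hnotMem)) (he.1.1 hu)))
  · refine Set.eq_empty_of_forall_notMem fun e ⟨heM, he⟩ => ?_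
    obtain ⟨u, hu, v, hv, huv, rfl⟩ := hG.exists_eq_mk he.1
    rw [mk_mem_edgesIn huv, Set.mem_compl_iff, Set.mem_compl_iff, hG.mem_inter_union_diff_iff,
      hG.mem_inter_union_diff_iff] at he
    have hvR : v ∈ looseReach G A b M := not_not.1 fun h => he.2 (iff_of_false hv h)
    exact he.1 (iff_of_true hu (mem_looseReach_of_adj huv (iff_of_true hu heM) hvR))

theorem inter_looseReach_eq (hG : Bipartition G A B) (hM : IsMaxBMatching G b M) :
    A ∩ looseReach G A b M = Dset G b ∩ A := by
  ext v
  constructor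
  · rintro ⟨hvA, hreach⟩
    obtain ⟨z, hz, hloose, p, hp, hr⟩ := exists_isPath_of_mem_looseReach hreach
    exact ⟨hM.mem_Dset_of_isResidual hG hp hr hvA hz hloose, hvA⟩
  · rintro ⟨⟨N, hN, hloose⟩, hvA⟩
    refine ⟨hvA, by_contra fun hreach => hloose.ne ?_⟩
    refine (hN.isVerifying_iff.1 (hM.isVerifying_looseReach hG)).1 v fun hv => hreach ?_
    exact ((hG.mem_inter_union_diff_iff).1 hv).1 hvA

end IsMaxBMatching

/-! ### Flexible edges -/

theorem IsVerifying.mem_iff_of_isFlexibleEdge (hZ : IsVerifying G b Z)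
    (huv : IsFlexibleEdge G b s(u, v)) : u ∈ Z ↔ v ∉ Z := by
  obtain ⟨⟨N, hN, hmem⟩, N', hN', hnotMem⟩ := huv
  have hin : s(u, v) ∉ edgesIn G Z := fun h => hnotMem ((hN'.isVerifying_iff.1 hZ).2.1 h)
  have hout : s(u, v) ∉ edgesIn G Zᶜ := fun h =>
    (Set.eq_empty_iff_forall_notMem.1 (hN.isVerifying_iff.1 hZ).2.2) _ ⟨hmem, h⟩
  have huvG : G.Adj u v := hN.1.1 hmem
  rw [mk_mem_edgesIn huvG] at hin hout
  grind

theorem mem_looseReach_iff_of_reachable (hG : Bipartition G A B) (hM : IsMaxBMatching G b M)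
    (h : (flexGraph G b).Reachable u v) :
    u ∈ looseReach G A b M ↔ v ∈ looseReach G A b M := by
  obtain ⟨p⟩ := h
  induction p with
  | nil => rfl
  | @cons u v w huv _ ih =>
    have hcross := (hM.isVerifying_looseReach hG).mem_iff_of_isFlexibleEdge huv
    obtain ⟨⟨N, hN, hmem⟩, -⟩ := huv
    have hadj := hG.mem_left_iff_of_adj (hN.1.1 hmem)
    rw [hG.mem_inter_union_diff_iff, hG.mem_inter_union_diff_iff] at hcross
    tauto

theorem IsBMatching.subset (hM : IsBMatching G b M) (h : N ⊆ M) : IsBMatching G b N :=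
  ⟨h.trans hM.1, fun v => (degIn_mono h v).trans (hM.2 v)⟩

theorem IsBMatching.insert (hM : IsBMatching G b M) (h : G.Adj u v) (huv : s(u, v) ∉ M)
    (hu : IsLoose b M u) (hv : IsLoose b M v) : IsBMatching G b (Insert.insert s(u, v) M) := by
  classical
  refine ⟨Set.insert_subset h hM.1, fun w => ?_⟩
  change degIn (Insert.insert s(u, v) M) w ≤ b w
  rw [degIn_insert M.toFinite huv]
  split_ifs with hw
  · obtain rfl | rfl := Sym2.mem_iff.1 hw
    exacts [hu, hv]
  · exact hM.2 w

theorem IsBMatching.notMem_of_eq_zero {e : Sym2 V} (hM : IsBMatching G b M) (hv : b v = 0)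
    (hve : v ∈ e) : e ∉ M := fun he =>
  (degIn_pos_iff.2 ⟨e, he, hve⟩).not_ge (hv ▸ hM.2 v)

theorem exists_isMaxBMatching_mem (h : G.Adj v x) (hv : b v ≠ 0) (hx : x ∈ Dset G b) :
    ∃ N, IsMaxBMatching G b N ∧ s(v, x) ∈ N := by
  obtain ⟨N, hN, hxloose⟩ := hx
  by_cases hmem : s(v, x) ∈ N
  · exact ⟨N, hN, hmem⟩
  by_cases hvloose : IsLoose b N v
  · have hle := hN.2 _ (hN.1.insert h hmem hvloose hxloose)
    rw [Set.ncard_insert_of_notMem hmem] at hle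
    omega
  obtain ⟨e, he, hve⟩ : ∃ e ∈ N, v ∈ e :=
    degIn_pos_iff.1 ((Nat.pos_of_ne_zero hv).trans_le (not_lt.1 hvloose))
  have hswap : IsBMatching G b (insert s(v, x) (N \ {e})) :=
    (hN.1.subset Set.sdiff_subset).insert h (fun h => hmem h.1)
      ((degIn_diff_singleton_lt he hve).trans_le (hN.1.2 v))
      ((degIn_mono Set.sdiff_subset x).trans_lt hxloose)
  exact ⟨_, hN.of_ncard_le hswap (Set.ncard_exchange hmem he).ge, Set.mem_insert _ _⟩

theorem supp_connectedComponentMk_of_eq_zero (hv : b v = 0) :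
    ((flexGraph G b).connectedComponentMk v).supp = {v} := by
  refine Set.eq_singleton_iff_unique_mem.2 ⟨rfl, fun w hw => ?_⟩
  obtain ⟨p⟩ := SimpleGraph.ConnectedComponent.exact hw.symm
  cases p with
  | nil => rfl
  | cons h =>
    obtain ⟨⟨N, hN, hmem⟩, -⟩ := h
    exact absurd hmem (hN.1.notMem_of_eq_zero hv (Sym2.mem_mk_left _ _))

theorem hookedUp_of_mem_looseReach (hG : Bipartition G A B) (hM : IsMaxBMatching G b M)
    (hv : v ∈ looseReach G A b M) :
    HookedUp G b A ((flexGraph G b).connectedComponentMk v) := by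
  have hD := hM.inter_looseReach_eq hG
  by_cases hvA : v ∈ A
  · exact .inl ⟨v, ⟨rfl, hvA⟩, (hD.subset ⟨hvA, hv⟩).1⟩
  obtain ⟨x, hx, hvx, hnotMem⟩ := exists_adj_of_mem_looseReach hv hvA
  have hxD : x ∈ Dset G b ∩ A :=
    hD.subset ⟨(hG.mem_left_iff_of_adj hvx.symm).2 hvA, hx⟩
  by_cases hbv : b v = 0
  · exact .inr ⟨v, supp_connectedComponentMk_of_eq_zero hbv, hbv, x, hxD, hvx⟩
  · have hflex : (flexGraph G b).Adj x v := by
      rw [SimpleGraph.adj_comm]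
      exact ⟨exists_isMaxBMatching_mem hvx hbv hxD.1, M, hM, hnotMem⟩
    exact .inl ⟨x, ⟨SimpleGraph.ConnectedComponent.sound hflex.reachable, hxD.2⟩, hxD.1⟩

theorem supp_subset_looseReach (hG : Bipartition G A B) (hM : IsMaxBMatching G b M)
    {c : FlexComp G b} (hc : HookedUp G b A c) : c.supp ⊆ looseReach G A b M := by
  have hD := hM.inter_looseReach_eq hG
  rcases hc with ⟨x, ⟨hxc, hxA⟩, hxD⟩ | ⟨v, hc, hbv, x, hx, hvx⟩
  · intro v hv
    have hxv : (flexGraph G b).Reachable x v :=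
      SimpleGraph.ConnectedComponent.exact (hxc.trans hv.symm)
    exact (mem_looseReach_iff_of_reachable hG hM hxv).1 (hD.superset ⟨hxD, hxA⟩).2
  · rw [hc, Set.singleton_subset_iff]
    have hvA : v ∉ A := (hG.mem_left_iff_of_adj hvx.symm).1 hx.2
    exact mem_looseReach_of_adj hvx
      (iff_of_false hvA (hM.1.notMem_of_eq_zero hbv (Sym2.mem_mk_left v x))) (hD.superset hx).2

theorem looseReach_eq_biUnion (hG : Bipartition G A B) (hM : IsMaxBMatching G b M) :
    looseReach G A b M = ⋃ c ∈ {c : FlexComp G b | HookedUp G b A c}, c.supp :=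
  Set.Subset.antisymm
    (fun _ hv => Set.mem_biUnion (hookedUp_of_mem_looseReach hG hM hv)
      SimpleGraph.ConnectedComponent.connectedComponentMk_mem)
    (Set.iUnion₂_subset fun _ hc => supp_subset_looseReach hG hM hc)

end Finite

end

/-- For a maximum `b`-matching `M`: with `U_A` the `M`-loose vertices of `A`, `S_A` the
vertices with an `M`-wedge path to `U_A`, and `T_A` the vertices of `B` with an
`M`-exposed path to `U_A`: `S_A ∪ (B ∖ T_A)` is a `b`-verifying set, `S_A = D(G;b) ∩ A`,
and `S_A ∪ T_A` is the union of the vertex sets of all inconsistent flexible components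
hooked up by `A`. -/
theorem stmt_6 (G : SimpleGraph V) (A B : Set V) (hG : Bipartition G A B) (b : V → ℕ)
    (M : Set (Sym2 V)) (hM : IsMaxBMatching G b M)
    (UA SA TA : Set V)
    (hUA : UA = {v ∈ A | IsLoose b M v})
    (hSA : SA = {x ∈ A | ∃ z ∈ UA, ∃ p : G.Walk x z, IsWedgePath M p})
    (hTA : TA = {y ∈ B | ∃ z ∈ UA, ∃ p : G.Walk y z, IsExposedPath M p}) :
    IsVerifying G b (SA ∪ (B \ TA)) ∧
    SA = Dset G b ∩ A ∧
    SA ∪ TA = ⋃ c ∈ {c : FlexComp G b | HookedUp G b A c}, c.supp := by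
  have hS : SA = A ∩ looseReach G A b M := by
    rw [hSA, hUA, setOf_isWedgePath_eq hG]
  have hT : TA = B ∩ looseReach G A b M := by
    rw [hTA, hUA, setOf_isExposedPath_eq hG]
  refine ⟨?_, ?_, ?_⟩
  · rw [hS, hT, Set.sdiff_self_inter]
    exact hM.isVerifying_looseReach hG
  · rw [hS, hM.inter_looseReach_eq hG]
  · rw [hS, hT, ← Set.union_inter_distrib_right, hG.cover, Set.univ_inter,
      looseReach_eq_biUnion hG hM]
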